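/- Let f : ℕ → ℚ be strictly increasing with f(0) = 0 and f(1) = 1, and suppose there exist rationals p, q with q ≠ 0 such that f(n+2) = p·f(n+1) + q·f(n) for all n, where the polynomial X² − pX − q has two distinct complex roots, the ratio of these two roots is not a root of unity, and neither root is a root of unity. If the set of triples (m,n,k) of pairwise distinct natural numbers with f(n) ≠ 0 and f(m) + f(k) = 2·f(n) is infinite, then p = 1 and q = 1, i.e. f is the Fibonacci sequence: f(n) = F_n for all n. -/

import Mathlib

/-!
Write `A > |B|` for the roots of `X² - pX - q`; strict monotonicity forces them to be real
(`disc_nonneg`) and, with non-unitarity, forces `A > 1`. Since `f n = (A ^ n - B ^ n) / (A - B)`, a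
progression with indices `m < n < k` is a relation
`A ^ m + A ^ k - 2 * A ^ n = B ^ m + B ^ k - 2 * B ^ n`, whose right side is negligible compared
with `A ^ n`. The gap `a = k - n` is bounded (`gap_bound`), so infinitely many progressions share
the same `a`. There are two possibilities.

* Infinitely many of them also share `b = n - m`. Passing to the limit, `A`, and then also `B`, is
  a root of `X ^ (a + b) - 2 * X ^ b + 1`. So `A` and `B` are algebraic units, whence `p ∈ ℤ` and
  `q = ±1`; moreover `A < 2`, and only `p = q = 1` remains (`eq_one_of_fixed_gaps`).
* The gap `n - m` is unbounded. Passing to the limit, `A ^ a = 2`. As `A ^ a` is a rational linear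
  combination of `1` and `A`, with nonzero coefficient of `A`, the root `A` is rational; hence
  `A = 2`, `a = 1`, and `B` is rational. The relation becomes the monic integral equation
  `B ^ (n + 1) - 2 * B ^ n + B ^ m - 2 ^ m = 0`, so `B` is an integer with `|B| < 2`, which
  is impossible as `B ∉ {0, 1, -1}` (`false_of_pow_eq_two`).

Because `F 1 = F 2`, the conclusion is at odds with strict monotonicity (which gives
`p = f 2 > f 1 = 1`), so the hypotheses taken together are contradictory. The central result
`eq_one_of_infinite` does not exploit this: its hypotheses concern only the roots `A` and `B`, and
the Fibonacci roots satisfy them.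
-/

namespace FibAP

open Polynomial Filter Topology

/-! ### Integrality -/

lemma isIntegral_of_pow_add {x : ℝ} (P : ℤ[X]) (N : ℕ) (hdeg : P.degree < N)
    (h : x ^ N + aeval x P = 0) : IsIntegral ℤ x :=
  ⟨X ^ N + P, monic_X_pow_add hdeg, by
    simpa [aeval_def] using h⟩

lemma exists_int_of_isIntegral {r : ℚ} (h : IsIntegral ℤ (r : ℝ)) : ∃ z : ℤ, (z : ℚ) = r := by
  have h' : IsIntegral ℤ (algebraMap ℚ ℝ r) := by simpa using h
  rw [isIntegral_algebraMap_iff (algebraMap ℚ ℝ).injective] at h'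
  obtain ⟨z, hz⟩ := IsIntegrallyClosed.isIntegral_iff.1 h'
  exact ⟨z, by simpa using hz⟩

lemma isIntegral_of_trinomial {x : ℝ} {a b : ℕ} (ha : 0 < a)
    (h : x ^ (a + b) + 1 = 2 * x ^ b) : IsIntegral ℤ x := by
  refine isIntegral_of_pow_add (C (-2) * X ^ b + C 1) (a + b) ?_ ?_
  · refine lt_of_le_of_lt (b := (b : WithBot ℕ)) ?_ (by exact_mod_cast (by omega : b < a + b))
    compute_degree
    exact le_rfl
  · simp only [map_add, map_mul, map_pow, aeval_X, aeval_C]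
    simp only [eq_intCast]
    push_cast
    linarith

lemma isIntegral_inv_of_trinomial {x : ℝ} {a b : ℕ} (hb : 0 < b) (hx : x ≠ 0)
    (h : x ^ (a + b) + 1 = 2 * x ^ b) : IsIntegral ℤ x⁻¹ := by
  refine isIntegral_of_trinomial (b := a) hb ?_
  rw [inv_pow, inv_pow, add_comm b a]
  field_simp
  rw [pow_add] at h ⊢
  field_simp
  linarith

/-! ### Gaps in a progression -/

lemma gap_bound {A B : ℝ} (hA : 1 < A) (hBA : |B| < A) :
    ∃ C : ℕ, ∀ m n k : ℕ, n < k →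
      A ^ m - B ^ m + (A ^ k - B ^ k) = 2 * (A ^ n - B ^ n) → k < n + C := by
  have hA0 : 0 < A := by linarith
  have hpow : ∀ n, |B| ^ n ≤ A ^ n := fun n => pow_le_pow_left₀ (abs_nonneg _) hBA.le n
  have habs : ∀ n, |B ^ n| ≤ A ^ n := fun n => by rw [abs_pow]; exact hpow n
  obtain ⟨C, hC⟩ := pow_unbounded_of_one_lt (4 * A / (A - |B|)) hA
  refine ⟨C, fun m n k hnk h => ?_⟩
  by_contra! hk
  have h1 : A ^ k - B ^ k ≤ 4 * A ^ n := by
    have := abs_le.1 (habs m)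
    have := abs_le.1 (habs n)
    linarith
  have h2 : A ^ (k - 1) * (A - |B|) ≤ A ^ k - B ^ k := by
    obtain ⟨j, rfl⟩ : ∃ j, k = j + 1 := ⟨k - 1, by omega⟩
    have h3 : B ^ (j + 1) ≤ A ^ j * |B| := by
      calc B ^ (j + 1) ≤ |B| ^ (j + 1) := by rw [← abs_pow]; exact le_abs_self _
        _ = |B| ^ j * |B| := pow_succ _ _
        _ ≤ A ^ j * |B| := mul_le_mul_of_nonneg_right (hpow j) (abs_nonneg _)
    simp only [Nat.add_sub_cancel]
    rw [pow_succ A]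
    linarith
  have h3 : A ^ k * (A - |B|) ≤ 4 * A * A ^ n := by
    obtain ⟨j, rfl⟩ : ∃ j, k = j + 1 := ⟨k - 1, by omega⟩
    simp only [Nat.add_sub_cancel] at h2
    rw [pow_succ A]
    nlinarith
  have h4 : A ^ (n + C) ≤ A ^ k := pow_le_pow_right₀ hA.le hk
  rw [div_lt_iff₀ (by linarith)] at hC
  have hn : 0 < A ^ n := by positivity
  have h5 : A ^ (n + C) * (A - |B|) ≤ 4 * A * A ^ n :=
    (mul_le_mul_of_nonneg_right h4 (by linarith)).trans h3
  rw [pow_add] at h5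
  nlinarith

/-- After division by `A ^ n`, the contribution of `B` decays geometrically in `n`, uniformly in
the smaller index `m = n - b`. -/
lemma main_term_bound {A B : ℝ} (hA : 1 < A) {m b a : ℕ}
    (h : A ^ m - B ^ m + (A ^ (m + b + a) - B ^ (m + b + a)) =
      2 * (A ^ (m + b) - B ^ (m + b))) :
    |A ^ a + (A⁻¹) ^ b - 2| ≤ 4 * max 1 |B| ^ a * (max 1 |B| / A) ^ (m + b) := by
  have hA0 : 0 < A := by linarith
  set R := max 1 |B| with hR
  have hR1 : 1 ≤ R := le_max_left _ _
  have hpow : ∀ j ≤ m + b + a, |B ^ j| ≤ R ^ (m + b + a) := fun j hj => by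
    rw [abs_pow]
    exact (pow_le_pow_left₀ (abs_nonneg _) (le_max_right _ _) j).trans (pow_le_pow_right₀ hR1 hj)
  have e1 : A ^ (m + b) * (A ^ a + (A⁻¹) ^ b - 2) =
      B ^ m + B ^ (m + b + a) - 2 * B ^ (m + b) := by
    have : A ^ (m + b) * (A⁻¹) ^ b = A ^ m := by
      rw [pow_add, mul_assoc, ← mul_pow, mul_inv_cancel₀ hA0.ne']; simp
    rw [mul_sub, mul_add, this, ← pow_add]
    linarith
  have e2 : |B ^ m + B ^ (m + b + a) - 2 * B ^ (m + b)| ≤ 4 * R ^ (m + b + a) := by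
    have h1 := abs_le.1 (hpow m (by omega))
    have h2 := abs_le.1 (hpow (m + b + a) le_rfl)
    have h3 := abs_le.1 (hpow (m + b) (by omega))
    rw [abs_le]
    constructor <;> linarith
  rw [← e1, abs_mul, abs_of_pos (by positivity : 0 < A ^ (m + b))] at e2
  rw [div_pow, mul_div_assoc', le_div_iff₀ (by positivity), mul_assoc, ← pow_add,
    add_comm a, mul_comm]
  exact e2

/-! ### The two limiting cases -/

lemma eq_one_of_fixed_gaps {p q : ℚ} {A B : ℝ} (hsum : A + B = p) (hprod : A * B = -q)
    (hA : 1 < A) (hBA : |B| < A) (hB0 : B ≠ 0) {a b : ℕ} (ha : 0 < a) (hb : 0 < b)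
    (hAr : A ^ (a + b) + 1 = 2 * A ^ b) (hBr : B ^ (a + b) + 1 = 2 * B ^ b) :
    p = 1 ∧ q = 1 := by
  have hA0 : 0 < A := by linarith
  have hA2 : A < 2 := by
    have h1 : A ≤ A ^ a := le_self_pow₀ hA.le ha.ne'
    have h2 : A ^ a < 2 := by
      rw [pow_add] at hAr
      have : 0 < A ^ b := by positivity
      nlinarith
    linarith
  have iA := isIntegral_of_trinomial ha hAr
  have iB := isIntegral_of_trinomial ha hBr
  have iA' := isIntegral_inv_of_trinomial hb hA0.ne' hAr
  have iB' := isIntegral_inv_of_trinomial hb hB0 hBr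
  obtain ⟨P, hP⟩ := exists_int_of_isIntegral (r := p) (hsum ▸ iA.add iB)
  have hqR : (q : ℝ) = -(A * B) := by linarith
  obtain ⟨Q, hQ⟩ := exists_int_of_isIntegral (r := q) (by rw [hqR]; exact (iA.mul iB).neg)
  obtain ⟨Q', hQ'⟩ := exists_int_of_isIntegral (r := q⁻¹) (by
    push_cast
    rw [hqR, inv_neg, mul_inv]
    exact (iA'.mul iB').neg)
  have hq0 : q ≠ 0 := by
    rintro rfl
    have := mul_ne_zero hA0.ne' hB0
    simp [hprod] at this
  have hQQ : Q * Q' = 1 := by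
    have : (Q : ℚ) * Q' = 1 := by rw [hQ, hQ', mul_inv_cancel₀ hq0]
    exact_mod_cast this
  have hPR : (P : ℝ) = A + B := by rw [hsum, ← hP]; simp
  have hQR : (Q : ℝ) = -(A * B) := by rw [← hqR, ← hQ]; simp
  have hBlt := abs_lt.1 hBA
  have hPpos : 0 < P := by
    have : (0 : ℝ) < P := by linarith
    exact_mod_cast this
  -- `A + B` and `A * B` determine the discriminant, which is positive as `A ≠ B`.
  have hD : 0 < P ^ 2 + 4 * Q := by
    have : (0 : ℝ) < (P : ℝ) ^ 2 + 4 * Q := by rw [hPR, hQR]; nlinarith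
    exact_mod_cast this
  rcases Int.isUnit_iff.1 (IsUnit.of_mul_eq_one _ hQQ) with h | h
  · subst h
    have hBneg : B < 0 := by
      push_cast at hQR
      by_contra! hB
      nlinarith
    have : P < 2 := by
      have : (P : ℝ) < 2 := by linarith
      exact_mod_cast this
    have : P = 1 := by omega
    subst this
    exact ⟨by simpa using hP.symm, by simpa using hQ.symm⟩
  · exfalso
    subst h
    have hB1 : B < 1 := by
      push_cast at hQR
      by_contra! hB
      nlinarith
    have : P < 3 := by
      have : (P : ℝ) < 3 := by linarith
      exact_mod_cast this
    nlinarith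

/-- Reduction of powers of the two roots modulo their common quadratic polynomial. -/
lemma exists_linear_pow {p q : ℚ} {A B : ℝ} (hsum : A + B = p) (hprod : A * B = -q) (n : ℕ) :
    ∃ r s : ℚ, A ^ n = r * A + s ∧ B ^ n = r * B + s := by
  induction n with
  | zero => exact ⟨0, 1, by simp, by simp⟩
  | succ n ih =>
    obtain ⟨r, s, h1, h2⟩ := ih
    refine ⟨r * p + s, r * q, ?_, ?_⟩
    · rw [pow_succ, h1]; push_cast
      linear_combination (r * A : ℝ) * hsum - (r : ℝ) * hprod
    · rw [pow_succ, h2]; push_cast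
      linear_combination (r * B : ℝ) * hsum - (r : ℝ) * hprod

lemma false_of_pow_eq_two {p q : ℚ} {A B : ℝ} (hsum : A + B = p) (hprod : A * B = -q)
    (hA : 1 < A) (hBA : |B| < A) (hB0 : B ≠ 0) (hB1 : |B| ≠ 1) {a m n : ℕ} (ha : 0 < a)
    (hAa : A ^ a = 2) (hmn : m < n)
    (h : A ^ m - B ^ m + (A ^ (n + a) - B ^ (n + a)) = 2 * (A ^ n - B ^ n)) : False := by
  have hA0 : 0 < A := by linarith
  have iA : IsIntegral ℤ A := by
    refine isIntegral_of_pow_add (C (-2)) a ?_ (by rw [aeval_C, hAa]; norm_num)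
    exact lt_of_le_of_lt degree_C_le (by exact_mod_cast ha)
  obtain ⟨r, s, hr, hs⟩ := exists_linear_pow hsum hprod a
  have hr0 : r ≠ 0 := by
    rintro rfl
    have h1 : |B| ^ a < A ^ a := pow_lt_pow_left₀ hBA (abs_nonneg _) ha.ne'
    rw [← abs_pow, hs, hr] at h1
    have := le_abs_self ((0 : ℚ) * B + s : ℝ)
    simp at h1 this
    linarith
  have hArat : A = (((2 - s) / r : ℚ) : ℝ) := by
    have : (r : ℝ) ≠ 0 := by exact_mod_cast hr0
    push_cast
    rw [eq_div_iff this]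
    linarith
  have hA2 : A = 2 := by
    obtain ⟨z, hz⟩ := exists_int_of_isIntegral (hArat ▸ iA)
    have hzA : A = z := by rw [hArat, ← hz]; simp
    have h1 : A ≤ 2 := hAa ▸ le_self_pow₀ hA.le ha.ne'
    rw [hzA] at hA h1 ⊢
    have h2 : 1 < z := by exact_mod_cast hA
    have h3 : z ≤ 2 := by exact_mod_cast h1
    have : z = 2 := by omega
    simp [this]
  subst hA2
  have ha1 : a = 1 := by
    have : (2 : ℝ) ^ a = 2 ^ 1 := by simpa using hAa
    exact pow_right_injective₀ (by norm_num) (by norm_num) this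
  subst ha1
  have iB : IsIntegral ℤ B := by
    refine isIntegral_of_pow_add (C (-2) * X ^ n + X ^ m + C (-2 ^ m)) (n + 1) ?_ ?_
    · refine lt_of_le_of_lt (b := (n : WithBot ℕ)) ?_ (by exact_mod_cast n.lt_succ_self)
      compute_degree
      exact max_le le_rfl (Nat.mono_cast hmn.le)
    · simp only [map_add, map_mul, map_pow, aeval_X, aeval_C]
      simp only [eq_intCast]
      push_cast
      rw [pow_succ (2 : ℝ) n] at h
      linarith
  have hBrat : B = ((p - 2 : ℚ) : ℝ) := by push_cast; linarith
  obtain ⟨z, hz⟩ := exists_int_of_isIntegral (hBrat ▸ iB)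
  have hzB : B = z := by rw [hBrat, ← hz]; simp
  rw [hzB] at hB0 hB1 hBA
  have g0 : z ≠ 0 := by exact_mod_cast hB0
  have g1 : |z| ≠ 1 := by exact_mod_cast hB1
  have g2 : |z| < 2 := by exact_mod_cast hBA
  have g3 := abs_pos.2 g0
  omega

/-! ### Infinitely many progressions -/

/-- The form of the result that also covers the Fibonacci numbers: it is phrased through the roots
`A`, `B` only, with no monotonicity assumption. -/
theorem eq_one_of_infinite {p q : ℚ} {A B : ℝ} (hsum : A + B = p) (hprod : A * B = -q)
    (hA : 1 < A) (hBA : |B| < A) (hB0 : B ≠ 0) (hB1 : |B| ≠ 1)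
    (hinf : {x : ℕ × ℕ × ℕ | x.1 < x.2.1 ∧ x.2.1 < x.2.2 ∧
      A ^ x.1 - B ^ x.1 + (A ^ x.2.2 - B ^ x.2.2) = 2 * (A ^ x.2.1 - B ^ x.2.1)}.Infinite) :
    p = 1 ∧ q = 1 := by
  have hA0 : 0 < A := by linarith
  obtain ⟨C, hC⟩ := gap_bound hA hBA
  -- `T a` consists of the pairs `(m, b)` giving a progression with indices `m, m + b, m + b + a`.
  let T : ℕ → Set (ℕ × ℕ) := fun a => {y | 0 < y.2 ∧
    A ^ y.1 - B ^ y.1 + (A ^ (y.1 + y.2 + a) - B ^ (y.1 + y.2 + a)) =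
      2 * (A ^ (y.1 + y.2) - B ^ (y.1 + y.2))}
  obtain ⟨a, ha, hTa⟩ : ∃ a, 0 < a ∧ (T a).Infinite := by
    by_contra! hfin
    refine hinf (Set.Finite.subset (s := ⋃ a ∈ Set.Ioo 0 C,
      (fun y : ℕ × ℕ => (y.1, y.1 + y.2, y.1 + y.2 + a)) '' T a) ?_ ?_)
    · exact (Set.finite_Ioo 0 C).biUnion fun a ha =>
        (Set.not_infinite.1 (by simpa using hfin a ha.1)).image _
    · rintro ⟨m, n, k⟩ ⟨hmn, hnk, h⟩
      simp only at hmn hnk h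
      have := hC m n k hnk h
      simp only [Set.mem_iUnion]
      refine ⟨k - n, ⟨by omega, by omega⟩, (m, n - m), ⟨by simp; omega, ?_⟩, ?_⟩
      · simp only
        rw [show m + (n - m) = n by omega, show n + (k - n) = k by omega]
        exact h
      · simp only [Prod.mk.injEq, true_and]
        omega
  have hratio : max 1 |B| / A < 1 := by
    rw [div_lt_one hA0]
    exact max_lt hA hBA
  have hlim : Tendsto (fun n : ℕ => 4 * max 1 |B| ^ a * (max 1 |B| / A) ^ n) atTop (𝓝 0) := by
    simpa using (tendsto_pow_atTop_nhds_zero_of_lt_one (by positivity) hratio).const_mul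
      (4 * max 1 |B| ^ a)
  by_cases hb : ∃ b, {m | (m, b) ∈ T a}.Infinite
  · obtain ⟨b, hb⟩ := hb
    obtain ⟨m₀, hb0, hm₀⟩ := hb.nonempty
    simp only at hb0 hm₀
    have hzero : A ^ a + (A⁻¹) ^ b - 2 = 0 := by
      by_contra hne
      obtain ⟨N, hN⟩ := eventually_atTop.1 (hlim.eventually_lt_const (abs_pos.2 hne))
      obtain ⟨m, hm, hNm⟩ := hb.exists_gt N
      exact (main_term_bound hA hm.2).not_gt (hN (m + b) (by omega))
    have hAr : A ^ (a + b) + 1 = 2 * A ^ b := by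
      have h1 : (A⁻¹) ^ b * A ^ b = 1 := by rw [← mul_pow, inv_mul_cancel₀ hA0.ne', one_pow]
      rw [pow_add]
      linear_combination A ^ b * hzero - h1
    have hBr : B ^ (a + b) + 1 = 2 * B ^ b := by
      have h1 : B ^ m₀ * (B ^ (a + b) + 1 - 2 * B ^ b) = 0 := by
        simp only [pow_add] at hm₀ hAr ⊢
        linear_combination A ^ m₀ * hAr - hm₀
      have := (mul_eq_zero.1 h1).resolve_left (pow_ne_zero _ hB0)
      linarith
    exact eq_one_of_fixed_gaps hsum hprod hA hBA hB0 ha hb0 hAr hBr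
  · exfalso
    push Not at hb
    have hunb : ∀ M, ∃ m b, M ≤ b ∧ (m, b) ∈ T a := by
      intro M
      by_contra! hM
      refine hTa (Set.Finite.subset (s := ⋃ b ∈ Set.Iio M,
        (fun m => (m, b)) '' {m | (m, b) ∈ T a}) ?_ ?_)
      · exact (Set.finite_Iio M).biUnion fun b _ => (by simpa using hb b : Set.Finite _).image _
      · rintro ⟨m, b⟩ h
        simp only [Set.mem_iUnion]
        refine ⟨b, ?_, m, h, rfl⟩
        by_contra hbM
        exact hM m b (by simpa using hbM) h
    have hAa : A ^ a = 2 := by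
      by_contra hne
      have hpos : 0 < |A ^ a - 2| / 2 := half_pos (abs_pos.2 (sub_ne_zero.2 hne))
      have hlim' : Tendsto (fun n : ℕ => (A⁻¹) ^ n) atTop (𝓝 0) :=
        tendsto_pow_atTop_nhds_zero_of_lt_one (by positivity) (inv_lt_one_of_one_lt₀ hA)
      obtain ⟨N, hN⟩ := eventually_atTop.1
        ((hlim.eventually_lt_const hpos).and (hlim'.eventually_lt_const hpos))
      obtain ⟨m, b, hNb, hmb⟩ := hunb N
      have h1 := (hN (m + b) (by omega)).1
      have h2 := (hN b hNb).2
      have h3 := main_term_bound hA hmb.2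
      have h4 : |A ^ a - 2| ≤ |A ^ a + (A⁻¹) ^ b - 2| + (A⁻¹) ^ b := by
        have h5 : 0 < (A⁻¹) ^ b := by positivity
        calc |A ^ a - 2| = |(A ^ a + (A⁻¹) ^ b - 2) - (A⁻¹) ^ b| := by ring_nf
          _ ≤ _ := (abs_sub _ _).trans (by rw [abs_of_pos h5])
      simp only at h3
      linarith
    obtain ⟨m, b, -, hb0, hmb⟩ := hunb 0
    exact false_of_pow_eq_two hsum hprod hA hBA hB0 hB1 ha hAa
      (by simp only at hb0; omega : m < m + b) hmb

/-! ### Reality of the roots -/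

/-- If the discriminant were negative, the ratios `f (n + 1) / f n` would drop by at least a fixed
positive amount at each step, while staying positive. -/
lemma disc_nonneg {f : ℕ → ℚ} {p q : ℚ} (hp : 0 < p) (hpos : ∀ n, 0 < f (n + 1))
    (h1 : f 1 = 1) (h2 : f 2 = p) (hrec : ∀ n : ℕ, f (n + 2) = p * f (n + 1) + q * f n) :
    0 ≤ p ^ 2 + 4 * q := by
  by_contra! hD
  have hδ : 0 < -(p ^ 2 + 4 * q) / (4 * p) := div_pos (by linarith) (by linarith)
  set δ := -(p ^ 2 + 4 * q) / (4 * p) with hδdef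
  have hδp : δ * p = -(p ^ 2 + 4 * q) / 4 := by rw [hδdef]; field_simp
  have key : ∀ n : ℕ, f (n + 2) ≤ (p - n * δ) * f (n + 1) := by
    intro n
    induction n with
    | zero => simp [h1, h2]
    | succ n ih =>
      have hx := hpos n
      have hy := hpos (n + 1)
      have hz := hrec (n + 1)
      rw [show n + 1 + 2 = n + 3 by ring, show n + 1 + 1 = n + 2 by ring] at *
      have hle : f (n + 2) ≤ p * f (n + 1) := by
        refine ih.trans (mul_le_mul_of_nonneg_right ?_ hx.le)
        have : (0 : ℚ) ≤ n * δ := by positivity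
        linarith
      have hstep : f (n + 3) * f (n + 1) ≤ f (n + 2) * (f (n + 2) - δ * f (n + 1)) := by
        have e : f (n + 2) * (f (n + 2) - δ * f (n + 1)) - f (n + 3) * f (n + 1) =
            (f (n + 2) - p / 2 * f (n + 1)) ^ 2 + δ * f (n + 1) * (p * f (n + 1) - f (n + 2)) := by
          rw [hz]
          linear_combination (- f (n + 1) ^ 2) * hδp
        have : 0 ≤ δ * f (n + 1) * (p * f (n + 1) - f (n + 2)) :=
          mul_nonneg (mul_pos hδ hx).le (by linarith)
        nlinarith [sq_nonneg (f (n + 2) - p / 2 * f (n + 1))]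
      have h3 : f (n + 2) * (f (n + 2) - δ * f (n + 1)) ≤
          f (n + 2) * ((p - (n + 1) * δ) * f (n + 1)) :=
        mul_le_mul_of_nonneg_left (by linarith) hy.le
      have h4 : f (n + 3) * f (n + 1) ≤ ((p - (n + 1) * δ) * f (n + 2)) * f (n + 1) := by
        linarith
      push_cast
      exact le_of_mul_le_mul_right h4 hx
  obtain ⟨n, hn⟩ := exists_nat_gt (p / δ)
  rw [div_lt_iff₀ hδ] at hn
  have := key n
  have := hpos (n + 1)
  have := hpos n
  nlinarith

end FibAP

/-- An increasing, simple, non-degenerate and non-unitary binary recurrence over `ℚ`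
with `f 0 = 0` and `f 1 = 1` that contains infinitely many three-term arithmetic
progressions is the Fibonacci sequence. -/
theorem fibonacci_characterization (f : ℕ → ℚ) (hmono : StrictMono f)
    (h0 : f 0 = 0) (h1 : f 1 = 1) (p q : ℚ) (hq : q ≠ 0)
    (hrec : ∀ n : ℕ, f (n + 2) = p * f (n + 1) + q * f n)
    (hroots : ∃ α β : ℂ, α ≠ β ∧
      α ^ 2 - (p : ℂ) * α - (q : ℂ) = 0 ∧ β ^ 2 - (p : ℂ) * β - (q : ℂ) = 0 ∧
      (∀ l : ℕ, 0 < l → (α / β) ^ l ≠ 1) ∧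
      (∀ l : ℕ, 0 < l → α ^ l ≠ 1) ∧ (∀ l : ℕ, 0 < l → β ^ l ≠ 1))
    (hinf : {x : ℕ × ℕ × ℕ | x.1 ≠ x.2.1 ∧ x.1 ≠ x.2.2 ∧ x.2.1 ≠ x.2.2 ∧
      f x.2.1 ≠ 0 ∧ f x.1 + f x.2.2 = 2 * f x.2.1}.Infinite) :
    p = 1 ∧ q = 1 ∧ ∀ n : ℕ, f n = Nat.fib n := by
  have h2 : f 2 = p := by simpa [h0, h1] using hrec 0
  have hge : ∀ n, 1 ≤ f (n + 1) := fun n => h1 ▸ hmono.monotone (by omega)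
  have hp : 0 < p := by
    have := hge 1
    rw [show 1 + 1 = 2 from rfl, h2] at this
    linarith
  -- The conditions on the complex roots, as conditions on `p` and `q`.
  obtain ⟨hD0, hone, hneg⟩ : p ^ 2 + 4 * q ≠ 0 ∧ 1 - p - q ≠ 0 ∧ 1 + p - q ≠ 0 := by
    obtain ⟨α, β, hne, hα, hβ, -, hα1, hβ1⟩ := hroots
    have hs : α + β = p := by
      have : (α - β) * (α + β - p) = 0 := by linear_combination hα - hβ
      exact sub_eq_zero.1 ((mul_eq_zero.1 this).resolve_left (sub_ne_zero.2 hne))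
    have hpr : α * β = -q := by linear_combination α * hs - hα
    refine ⟨fun h => ?_, fun h => ?_, fun h => ?_⟩
    · have hc : ((p ^ 2 + 4 * q : ℚ) : ℂ) = 0 := by rw [h]; simp
      push_cast at hc
      have : (α - β) ^ 2 = 0 := by linear_combination hc - 4 * hpr + (α + β + p) * hs
      exact hne (sub_eq_zero.1 (pow_eq_zero_iff (by norm_num) |>.1 this))
    · have hc : ((1 - p - q : ℚ) : ℂ) = 0 := by rw [h]; simp
      push_cast at hc
      have : (α - 1) * (β - 1) = 0 := by linear_combination hc + hpr - hs
      rcases mul_eq_zero.1 this with h | h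
      · exact hα1 1 one_pos (by linear_combination h)
      · exact hβ1 1 one_pos (by linear_combination h)
    · have hc : ((1 + p - q : ℚ) : ℂ) = 0 := by rw [h]; simp
      push_cast at hc
      have : (α + 1) * (β + 1) = 0 := by linear_combination hc + hpr + hs
      rcases mul_eq_zero.1 this with h | h
      · exact hα1 2 two_pos (by linear_combination (α - 1) * h)
      · exact hβ1 2 two_pos (by linear_combination (β - 1) * h)
  have hD : 0 < p ^ 2 + 4 * q :=
    lt_of_le_of_ne (FibAP.disc_nonneg hp (fun n => by linarith [hge n]) h1 h2 hrec) hD0.symm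
  have hDR : (0 : ℝ) < p ^ 2 + 4 * q := by exact_mod_cast hD
  have hpR : (0 : ℝ) < p := by exact_mod_cast hp
  obtain ⟨A, B, hsum, hprod, hlt⟩ : ∃ A B : ℝ, A + B = p ∧ A * B = -q ∧ B < A := by
    have hs := Real.sq_sqrt hDR.le
    have hs' := Real.sqrt_pos.2 hDR
    refine ⟨(p + √(p ^ 2 + 4 * q)) / 2, (p - √(p ^ 2 + 4 * q)) / 2, by ring, ?_, by linarith⟩
    linear_combination (-1 / 4 : ℝ) * hs
  have hBA : |B| < A := abs_lt.2 ⟨by linarith, hlt⟩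
  have hB0 : B ≠ 0 := by
    rintro rfl
    simp at hprod
    exact hq hprod
  have hone' : (1 - A) * (1 - B) ≠ 0 := by
    have : ((1 - p - q : ℚ) : ℝ) ≠ 0 := by exact_mod_cast hone
    push_cast at this
    rwa [show (1 - A) * (1 - B) = 1 - p - q by linear_combination hprod - hsum]
  have hneg' : (1 + A) * (1 + B) ≠ 0 := by
    have : ((1 + p - q : ℚ) : ℝ) ≠ 0 := by exact_mod_cast hneg
    push_cast at this
    rwa [show (1 + A) * (1 + B) = 1 + p - q by linear_combination hprod + hsum]
  have hB1 : |B| ≠ 1 := by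
    intro h
    rcases (abs_eq one_pos.le).1 h with rfl | rfl
    · simp at hone'
    · simp at hneg'
  have binet : ∀ n, (A - B) * (f n : ℝ) = A ^ n - B ^ n := by
    intro n
    induction n using Nat.twoStepInduction with
    | zero => simp [h0]
    | one => simp [h1]
    | more n ih1 ih2 =>
      rw [hrec]
      push_cast
      have hq' : (q : ℝ) = -(A * B) := by linarith
      rw [← hsum, hq']
      linear_combination (A + B) * ih2 - A * B * ih1
  have hA0 : 0 < A := (abs_nonneg B).trans_lt hBA
  have hA : 1 < A := by
    by_contra! hle
    have hA1 : A < 1 := lt_of_le_of_ne hle (by rintro rfl; simp at hone')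
    obtain ⟨n, hn⟩ := exists_pow_lt_of_lt_one (by linarith : 0 < (A - B) / 2) hA1
    have h3 : A ^ (n + 1) ≤ A ^ n := pow_le_pow_of_le_one hA0.le hle (by omega)
    have h4 : |B ^ (n + 1)| ≤ A ^ (n + 1) := by
      rw [abs_pow]; exact pow_le_pow_left₀ (abs_nonneg _) hBA.le _
    have h5 := (abs_le.1 h4).1
    have h6 := binet (n + 1)
    have h7 : (1 : ℝ) ≤ f (n + 1) := by exact_mod_cast hge n
    nlinarith
  obtain ⟨rfl, rfl⟩ : p = 1 ∧ q = 1 := by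
    refine FibAP.eq_one_of_infinite hsum hprod hA hBA hB0 hB1 fun hfin => hinf ?_
    -- A progression has `m < n < k` or `k < n < m`, by monotonicity.
    refine (hfin.union (hfin.image fun x => (x.2.2, x.2.1, x.1))).subset ?_
    rintro ⟨m, n, k⟩ ⟨hmn, hmk, hnk, -, h⟩
    simp only at hmn hmk hnk h
    have hR : A ^ m - B ^ m + (A ^ k - B ^ k) = 2 * (A ^ n - B ^ n) := by
      have h' : (f m : ℝ) + f k = 2 * f n := by exact_mod_cast h
      rw [← binet, ← binet, ← binet]
      linear_combination (A - B) * h'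
    rcases lt_or_gt_of_ne hmn with hlt' | hgt
    · left
      refine ⟨hlt', ?_, hR⟩
      have := hmono hlt'
      exact hmono.lt_iff_lt.1 (by linarith : f n < f k)
    · right
      refine ⟨(k, n, m), ⟨?_, hgt, by simpa only [add_comm] using hR⟩, rfl⟩
      have := hmono hgt
      exact hmono.lt_iff_lt.1 (by linarith : f k < f n)
  refine ⟨rfl, rfl, fun n => ?_⟩
  induction n using Nat.twoStepInduction with
  | zero => simp [h0]
  | one => simp [h1]
  | more n ih1 ih2 =>
    rw [hrec, ih1, ih2, Nat.fib_add_two]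
    push_cast
    ring
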